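/- arXiv:2510.07104 — 2 statements merged into one kernel-verified Lean document; each statement's English description precedes it below -/
import Mathlib

section
/- Let h: ℝ → [0,1] be an increasing (non-decreasing) function, let s > 0, and let Y be a real-valued random variable. Then |E[h(Y+s)] − E[h(Y)]| ≤ Q(Y;s). -/
open MeasureTheory ProbabilityTheory Filter Set
open scoped ENNReal

/-- The concentration (Lévy) function `Q(Y;λ) = sup_{x ∈ ℝ} P(x ≤ Y ≤ x + λ)`. -/
noncomputable def concQ {Ω : Type*} [MeasurableSpace Ω] (μ : Measure Ω)
    (Y : Ω → ℝ) (lam : ℝ) : ℝ :=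
  ⨆ x : ℝ, (μ {ω | x ≤ Y ω ∧ Y ω ≤ x + lam}).toReal

/-- A monotone function jumps past level `t` within distance `s` only on an interval of length `s`. -/
lemma Monotone.exists_mem_interval_of_lt_of_le_add {h : ℝ → ℝ} (hmono : Monotone h) (s t : ℝ) :
    ∃ x : ℝ, ∀ y, h y < t → t ≤ h (y + s) → x ≤ y ∧ y ≤ x + s := by
  refine ⟨sInf {x | t ≤ h x} - s, fun y hy hys => ?_⟩
  have hlower : y ∈ lowerBounds {x | t ≤ h x} := fun u hu =>
    le_of_lt (hmono.reflect_lt (hy.trans_le hu))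
  have hle : y ≤ sInf {x | t ≤ h x} := le_csInf ⟨y + s, hys⟩ hlower
  have hge : sInf {x | t ≤ h x} ≤ y + s := csInf_le ⟨y, hlower⟩ hys
  constructor <;> linarith

lemma measure_interval_le_concQ {Ω : Type*} [MeasurableSpace Ω] (μ : Measure Ω)
    [IsProbabilityMeasure μ] (Y : Ω → ℝ) (s x : ℝ) :
    μ.real {ω | x ≤ Y ω ∧ Y ω ≤ x + s} ≤ concQ μ Y s :=
  le_ciSup (f := fun x : ℝ => (μ {ω | x ≤ Y ω ∧ Y ω ≤ x + s}).toReal)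
    ⟨1, by rintro _ ⟨x, rfl⟩; exact measureReal_le_one⟩ x

/-- Superlevel sets of a monotone function of `Y` gain at most `Q(Y;s)` under a shift by `s`. -/
lemma measure_superlevel_shift_le {Ω : Type*} [MeasurableSpace Ω] (μ : Measure Ω)
    [IsProbabilityMeasure μ] {h : ℝ → ℝ} (hmono : Monotone h) (Y : Ω → ℝ) (s t : ℝ) :
    μ.real {ω | t ≤ h (Y ω + s)} ≤ μ.real {ω | t ≤ h (Y ω)} + concQ μ Y s := by
  obtain ⟨x, hx⟩ := hmono.exists_mem_interval_of_lt_of_le_add s t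
  calc μ.real {ω | t ≤ h (Y ω + s)}
      ≤ μ.real ({ω | t ≤ h (Y ω)} ∪ {ω | x ≤ Y ω ∧ Y ω ≤ x + s}) :=
        measureReal_mono fun ω hω => (le_or_gt t (h (Y ω))).imp id fun hlt => hx _ hlt hω
    _ ≤ μ.real {ω | t ≤ h (Y ω)} + μ.real {ω | x ≤ Y ω ∧ Y ω ≤ x + s} := measureReal_union_le _ _
    _ ≤ _ := by gcongr; exact measure_interval_le_concQ μ Y s x

lemma integrableOn_measure_superlevel {Ω : Type*} [MeasurableSpace Ω] (μ : Measure Ω)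
    [IsFiniteMeasure μ] (f : Ω → ℝ) (a b : ℝ) :
    IntegrableOn (fun t => μ.real {ω | t ≤ f ω}) (Ioc a b) := by
  have hanti : Antitone fun t => μ.real {ω | t ≤ f ω} := fun _ _ hst =>
    measureReal_mono fun _ hω => hst.trans hω
  exact (hanti.locallyIntegrable.integrableOn_isCompact isCompact_Icc).mono_set Ioc_subset_Icc_self

/-- For an increasing function `h : ℝ → [0,1]`, `s > 0` and a
real random variable `Y`, `|E[h(Y+s)] − E[h(Y)]| ≤ Q(Y;s)`. -/
theorem stmt7
    {Ω : Type*} [MeasurableSpace Ω] (μ : Measure Ω) [IsProbabilityMeasure μ]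
    (h : ℝ → ℝ) (hmono : Monotone h) (hrange : ∀ x, h x ∈ Set.Icc (0 : ℝ) 1)
    (s : ℝ) (hs : 0 < s)
    (Y : Ω → ℝ) (hY : Measurable Y) :
    |(∫ ω, h (Y ω + s) ∂μ) - ∫ ω, h (Y ω) ∂μ| ≤ concQ μ Y s := by
  have hint : ∀ Z : Ω → ℝ, Measurable Z → Integrable (fun ω => h (Z ω)) μ := fun Z hZ =>
    Integrable.of_mem_Icc 0 1 (hmono.measurable.comp hZ).aemeasurable (ae_of_all _ fun _ => hrange _)
  have hlayer : ∀ Z : Ω → ℝ, Measurable Z →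
      ∫ ω, h (Z ω) ∂μ = ∫ t in Ioc (0 : ℝ) 1, μ.real {ω | t ≤ h (Z ω)} := fun Z hZ =>
    (hint Z hZ).integral_eq_integral_Ioc_meas_le (ae_of_all _ fun _ => (hrange _).1)
      (ae_of_all _ fun _ => (hrange _).2)
  have hYs : Measurable fun ω => Y ω + s := hY.add_const s
  rw [abs_of_nonneg (sub_nonneg.2 (integral_mono (hint Y hY) (hint _ hYs)
    fun ω => hmono (by linarith))), hlayer Y hY, hlayer _ hYs, sub_le_iff_le_add']
  have hI := integrableOn_measure_superlevel μ (fun ω => h (Y ω)) 0 1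
  have hconst : IntegrableOn (fun _ : ℝ => concQ μ Y s) (Ioc (0 : ℝ) 1) :=
    integrableOn_const (by simp)
  calc ∫ t in Ioc (0 : ℝ) 1, μ.real {ω | t ≤ h (Y ω + s)}
      ≤ ∫ t in Ioc (0 : ℝ) 1, (μ.real {ω | t ≤ h (Y ω)} + concQ μ Y s) :=
        integral_mono (integrableOn_measure_superlevel μ _ 0 1) (hI.add hconst)
          fun t => measure_superlevel_shift_le μ hmono Y s t
    _ = _ := by rw [integral_add hI hconst]; simp
end

section
/- Fix an integer A ≥ 2 and let π be the identity permutation of [A]. Fix b ∈ [A] and integers (x_a)_{a∈[A]\{b}}. Then the function k ↦ Ξ_π( (x_a·1{a ≠ b} + k·1{a = b})_{a∈[A]} ), defined for k ∈ ℤ, is unimodal: there exists k₀ ∈ ℤ such that the function is non-decreasing for k ≤ k₀ and non-increasing for k ≥ k₀. Moreover, if b = 1 the function is non-decreasing on all of ℤ, and if b = A it is non-increasing on all of ℤ. -/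
open scoped Classical

/-- `Ξ_π((M_a)_a)`: the indicator that `M_{π(1)} ≥ M_{π(2)} ≥ ⋯ ≥ M_{π(A)}`, divided by
the number of permutations `ρ` with `M_{ρ(1)} ≥ ⋯ ≥ M_{ρ(A)}`. -/
noncomputable def Xi {A : ℕ} (π : Equiv.Perm (Fin A)) (M : Fin A → ℤ) : ℝ :=
  (if Antitone fun a => M (π a) then (1 : ℝ) else 0) /
    ((Finset.univ.filter fun ρ : Equiv.Perm (Fin A) =>
      Antitone fun a => M (ρ a)).card : ℝ)

/-- Two antitone rearrangements of the same tuple agree. -/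
lemma comp_eq_comp_of_antitone {A : ℕ} {M : Fin A → ℤ} {σ τ : Equiv.Perm (Fin A)}
    (hσ : Antitone (M ∘ σ)) (hτ : Antitone (M ∘ τ)) : M ∘ σ = M ∘ τ :=
  Tuple.unique_monotone (α := ℤᵒᵈ) (f := OrderDual.toDual ∘ M) hσ.dual_right hτ.dual_right

lemma Xi_one_of_not_antitone {A : ℕ} {M : Fin A → ℤ} (h : ¬ Antitone M) :
    Xi (1 : Equiv.Perm (Fin A)) M = 0 := by
  simp [Xi, h]

lemma Xi_one_of_antitone {A : ℕ} {M : Fin A → ℤ} (h : Antitone M) :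
    Xi (1 : Equiv.Perm (Fin A)) M =
      1 / ((Finset.univ.filter fun ρ : Equiv.Perm (Fin A) =>
        Antitone fun a => M (ρ a)).card : ℝ) := by
  simp [Xi, h]

lemma Xi_nonneg {A : ℕ} (π : Equiv.Perm (Fin A)) (M : Fin A → ℤ) : 0 ≤ Xi π M := by
  unfold Xi
  positivity

lemma Xi_one_le_of_card_le {A : ℕ} {M N : Fin A → ℤ} (hM : Antitone M) (hN : Antitone N)
    (h : (Finset.univ.filter fun ρ : Equiv.Perm (Fin A) => Antitone fun a => N (ρ a)).card ≤
      (Finset.univ.filter fun ρ : Equiv.Perm (Fin A) => Antitone fun a => M (ρ a)).card) :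
    Xi (1 : Equiv.Perm (Fin A)) M ≤ Xi (1 : Equiv.Perm (Fin A)) N := by
  rw [Xi_one_of_antitone hM, Xi_one_of_antitone hN]
  have hpos : 0 < (Finset.univ.filter fun ρ : Equiv.Perm (Fin A) =>
      Antitone fun a => N (ρ a)).card :=
    Finset.card_pos.mpr ⟨1, by simpa using hN⟩
  exact one_div_le_one_div_of_le (by exact_mod_cast hpos) (by exact_mod_cast h)

/-- If the value at `b` differs from all the others, then `Xi 1` is at least its value
for any other choice of the value at `b`. -/
lemma Xi_one_update_le {A : ℕ} {b : Fin A} {x : Fin A → ℤ} {k k' : ℤ}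
    (hk' : Antitone (Function.update x b k')) (hne : ∀ a, a ≠ b → x a ≠ k') :
    Xi (1 : Equiv.Perm (Fin A)) (Function.update x b k) ≤
      Xi (1 : Equiv.Perm (Fin A)) (Function.update x b k') := by
  by_cases hk : Antitone (Function.update x b k)
  swap
  · rw [Xi_one_of_not_antitone hk]
    exact Xi_nonneg _ _
  refine Xi_one_le_of_card_le hk hk' (Finset.card_le_card fun ρ hρ => ?_)
  simp only [Finset.mem_filter, Finset.mem_univ, true_and] at hρ ⊢
  have heq (a : Fin A) : Function.update x b k' (ρ a) = Function.update x b k' a :=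
    congrFun (comp_eq_comp_of_antitone (M := Function.update x b k') (σ := ρ) (τ := 1) hρ hk') a
  have hb : ρ b = b := by
    by_contra h
    exact hne _ h (by simpa [h] using heq b)
  have hfix : (fun a => Function.update x b k (ρ a)) = Function.update x b k := by
    funext a
    by_cases ha : a = b
    · rw [ha, hb]
    · have hρa : ρ a ≠ b := fun h => ha (ρ.injective (h.trans hb.symm))
      simpa [ha, hρa] using heq a
  rwa [hfix]

/-- Entries after `b` bound the value at `b` from below. -/
lemma le_of_antitone_update {A : ℕ} {b a : Fin A} {x : Fin A → ℤ} {k : ℤ}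
    (hk : Antitone (Function.update x b k)) (hab : b < a) : x a ≤ k := by
  simpa [hab.ne'] using hk hab.le

/-- Entries before `b` bound the value at `b` from above. -/
lemma ge_of_antitone_update {A : ℕ} {b a : Fin A} {x : Fin A → ℤ} {k : ℤ}
    (hk : Antitone (Function.update x b k)) (hab : a < b) : k ≤ x a := by
  simpa [hab.ne] using hk hab.le

lemma antitone_update_of_bounds {A : ℕ} {b : Fin A} {x : Fin A → ℤ} {k k' : ℤ}
    (hk : Antitone (Function.update x b k)) (hlo : ∀ a, b < a → x a ≤ k')
    (hhi : ∀ a, a < b → k' ≤ x a) : Antitone (Function.update x b k') := by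
  intro i j hij
  rcases hij.eq_or_lt with rfl | hlt
  · exact le_rfl
  by_cases hi : i = b
  · subst hi
    simpa [hlt.ne'] using hlo j hlt
  by_cases hj : j = b
  · subst hj
    simpa [hlt.ne] using hhi i hlt
  simpa [hi, hj] using hk hij

/-- If `k'` lies strictly within the bounds imposed on the value at `b` by the other entries,
then `Xi 1` is maximal at `k'`. -/
lemma Xi_one_update_le_of_strict_bounds {A : ℕ} {b : Fin A} {x : Fin A → ℤ} {k k' : ℤ}
    (hk : Antitone (Function.update x b k)) (hlo : ∀ a, b < a → x a < k')
    (hhi : ∀ a, a < b → k' < x a) :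
    Xi (1 : Equiv.Perm (Fin A)) (Function.update x b k) ≤
      Xi (1 : Equiv.Perm (Fin A)) (Function.update x b k') := by
  refine Xi_one_update_le (antitone_update_of_bounds hk (fun a h => (hlo a h).le)
    fun a h => (hhi a h).le) fun a ha => ?_
  rcases lt_or_gt_of_ne ha with h | h
  · exact (hhi a h).ne'
  · exact (hlo a h).ne

/-- Some value at `b` maximizes `Xi 1`. -/
lemma exists_Xi_one_update_max {A : ℕ} (b : Fin A) (x : Fin A → ℤ) :
    ∃ k₀ : ℤ, ∀ k : ℤ, Xi (1 : Equiv.Perm (Fin A)) (Function.update x b k) ≤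
      Xi (1 : Equiv.Perm (Fin A)) (Function.update x b k₀) := by
  by_cases hS : ∃ k, Antitone (Function.update x b k)
  · obtain ⟨k₀, hk₀, hmin⟩ := (measure fun k : ℤ =>
      (Finset.univ.filter fun ρ : Equiv.Perm (Fin A) =>
        Antitone fun a => Function.update x b k (ρ a)).card).wf.has_min
      {k | Antitone (Function.update x b k)} hS
    refine ⟨k₀, fun k => ?_⟩
    by_cases hk : Antitone (Function.update x b k)
    · exact Xi_one_le_of_card_le hk hk₀ (not_lt.mp (hmin k hk))
    · rw [Xi_one_of_not_antitone hk]
      exact Xi_nonneg _ _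
  · push Not at hS
    exact ⟨0, fun k => by rw [Xi_one_of_not_antitone (hS k)]; exact Xi_nonneg _ _⟩

/-- A value at `b` between `k` and a maximizer `k₀` of `Xi 1` does at least as well as `k`. -/
lemma Xi_one_update_le_of_between {A : ℕ} {b : Fin A} {x : Fin A → ℤ} {k₀ k k' : ℤ}
    (hmax : ∀ k : ℤ, Xi (1 : Equiv.Perm (Fin A)) (Function.update x b k) ≤
      Xi (1 : Equiv.Perm (Fin A)) (Function.update x b k₀))
    (h : (k ≤ k' ∧ k' ≤ k₀) ∨ (k₀ ≤ k' ∧ k' ≤ k)) :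
    Xi (1 : Equiv.Perm (Fin A)) (Function.update x b k) ≤
      Xi (1 : Equiv.Perm (Fin A)) (Function.update x b k') := by
  by_cases hk : Antitone (Function.update x b k)
  swap
  · rw [Xi_one_of_not_antitone hk]
    exact Xi_nonneg _ _
  by_cases hk₀ : Antitone (Function.update x b k₀)
  swap
  · refine (hmax k).trans ?_
    rw [Xi_one_of_not_antitone hk₀]
    exact Xi_nonneg _ _
  rcases eq_or_ne k' k with rfl | hne
  · exact le_rfl
  rcases eq_or_ne k' k₀ with rfl | hne₀
  · exact hmax k
  refine Xi_one_update_le_of_strict_bounds hk (fun a ha => ?_) fun a ha => ?_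
  · have h₁ := le_of_antitone_update hk ha
    have h₂ := le_of_antitone_update hk₀ ha
    omega
  · have h₁ := ge_of_antitone_update hk ha
    have h₂ := ge_of_antitone_update hk₀ ha
    omega

/-- For the identity permutation, a coordinate `b` and fixed integer
values `x a` of the other coordinates, the function
`k ↦ Ξ_id((x_a·1{a≠b} + k·1{a=b})_a)` is unimodal on `ℤ`; moreover it is
non-decreasing if `b` is the first coordinate and non-increasing if `b` is the last. -/
theorem stmt12 (A : ℕ) (hA : 2 ≤ A) (b : Fin A) (x : Fin A → ℤ) :
    (∃ k₀ : ℤ,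
      (∀ k k' : ℤ, k ≤ k' → k' ≤ k₀ →
        Xi (1 : Equiv.Perm (Fin A)) (Function.update x b k) ≤
          Xi (1 : Equiv.Perm (Fin A)) (Function.update x b k')) ∧
      (∀ k k' : ℤ, k₀ ≤ k → k ≤ k' →
        Xi (1 : Equiv.Perm (Fin A)) (Function.update x b k') ≤
          Xi (1 : Equiv.Perm (Fin A)) (Function.update x b k))) ∧
    ((b : ℕ) = 0 →
      Monotone fun k : ℤ => Xi (1 : Equiv.Perm (Fin A)) (Function.update x b k)) ∧
    ((b : ℕ) = A - 1 →
      Antitone fun k : ℤ => Xi (1 : Equiv.Perm (Fin A)) (Function.update x b k)) := by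
  obtain ⟨k₀, hmax⟩ := exists_Xi_one_update_max b x
  refine ⟨⟨k₀, fun k k' h h' => Xi_one_update_le_of_between hmax (.inl ⟨h, h'⟩),
    fun k k' h h' => Xi_one_update_le_of_between hmax (.inr ⟨h, h'⟩)⟩, ?_, ?_⟩
  · intro hb k k' hkk'
    rcases hkk'.eq_or_lt with rfl | hlt
    · exact le_rfl
    dsimp only
    by_cases hk : Antitone (Function.update x b k)
    · refine Xi_one_update_le_of_strict_bounds hk
        (fun a ha => (le_of_antitone_update hk ha).trans_lt hlt) fun a ha => ?_
      rw [Fin.lt_def] at ha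
      omega
    · rw [Xi_one_of_not_antitone hk]
      exact Xi_nonneg _ _
  · intro hb k' k hkk'
    rcases hkk'.eq_or_lt with rfl | hlt
    · exact le_rfl
    dsimp only
    by_cases hk : Antitone (Function.update x b k)
    · refine Xi_one_update_le_of_strict_bounds hk (fun a ha => ?_)
        fun a ha => hlt.trans_le (ge_of_antitone_update hk ha)
      rw [Fin.lt_def] at ha
      omega
    · rw [Xi_one_of_not_antitone hk]
      exact Xi_nonneg _ _
end
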